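/- Let n ≥ 1. For a point a = (a₀,…,aₙ) ∈ ℂ^{n+1}, every σ-invariant polynomial p ∈ ℂ[x₀,…,xₙ] with zero constant term vanishes at a if and only if a_j = 0 for all j with 0 ≤ j ≤ ⌊n/2⌋. Equivalently, some σ-invariant polynomial with zero constant term is nonzero at a precisely when the binary form Σ_{i=0}^{n} a_i X^{n−i} Y^i of degree n is not divisible by Y^{⌊n/2⌋+1}, i.e. precisely when strictly fewer than, or exactly, half of the n points on ℙ¹ it determines coincide at the point [1:0]. -/

import Mathlib

/-!
If `a_j = 0` for `j < k` and `2k ≤ n`, the quadratic invariant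
`∑ᵢ (-1)ⁱ (2k choose i) x_i x_{2k-i}` takes at `a` the value `(-1)ᵏ (2k choose k) a_k²`, so the
vanishing of all invariants forces `a_0 = a_1 = ⋯ = a_{⌊n/2⌋} = 0` by induction on `k`. It is
invariant because, in umbral notation `x_i x_j = αⁱ βʲ`, it is `(α - β)^(2k)`, and `σ_t` acts by
`α ↦ α + t`, `β ↦ β + t` (`sigma_quad`).

Conversely, an invariant is killed by the generator `D : x_i ↦ i x_{i-1}` of the action
(`opD_eq_zero`), and `D` is the raising operator of an `sl₂`-triple of derivations, with `Δ : x_i ↦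
(n - i) x_{i+1}` and `H : x_i ↦ (n - 2i) x_i`. As `Δ` is locally nilpotent, the weights of
highest weight vectors are nonnegative, so every monomial `x^e` of an invariant satisfies
`∑ᵢ e_i (n - 2i) ≥ 0` (`weight_nonneg`). A nonconstant such monomial contains some `x_i` with
`i ≤ n/2`, and hence vanishes at any `a` with `a_j = 0` for all `j ≤ n/2`.
-/

open MvPolynomial

/-- The coordinate form of the linear `ℂ⁺`-action on `Symⁿ(ℂ²)`:
the `ℂ`-algebra endomorphism of `ℂ[x₀,…,xₙ]` determined by
`σ_t(x_i) = Σ_{j=0}^{i} (i choose j)·t^(i−j)·x_j`. -/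
noncomputable def sigma (n : ℕ) (t : ℂ) :
    MvPolynomial (Fin (n + 1)) ℂ →ₐ[ℂ] MvPolynomial (Fin (n + 1)) ℂ :=
  aeval fun i : Fin (n + 1) =>
    ∑ j ∈ Finset.univ.filter (fun j : Fin (n + 1) => j ≤ i),
      C ((i.1.choose j.1 : ℂ) * t ^ (i.1 - j.1)) * X j

/-! ### The `sl₂`-triple of derivations -/

/-- The variable `x_k` indexed by a natural number, with `x_k = 0` for `k > n`. -/
noncomputable def xvar (n k : ℕ) : MvPolynomial (Fin (n + 1)) ℂ :=
  if h : k < n + 1 then X ⟨k, h⟩ else 0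

lemma xvar_val (n : ℕ) (i : Fin (n + 1)) : xvar n i.1 = X i := by
  rw [xvar, dif_pos i.2]

/-- The infinitesimal generator of the `ℂ⁺`-action: `x_i ↦ i x_{i-1}`. -/
noncomputable def opD (n : ℕ) :
    Derivation ℂ (MvPolynomial (Fin (n + 1)) ℂ) (MvPolynomial (Fin (n + 1)) ℂ) :=
  mkDerivation ℂ fun i => C (i.1 : ℂ) * xvar n (i.1 - 1)

/-- The opposite nilpotent operator: `x_i ↦ (n - i) x_{i+1}`. -/
noncomputable def opΔ (n : ℕ) :
    Derivation ℂ (MvPolynomial (Fin (n + 1)) ℂ) (MvPolynomial (Fin (n + 1)) ℂ) :=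
  mkDerivation ℂ fun i => C ((n : ℂ) - i.1) * xvar n (i.1 + 1)

/-- The semisimple operator: `x_i ↦ (n - 2i) x_i`. -/
noncomputable def opH (n : ℕ) :
    Derivation ℂ (MvPolynomial (Fin (n + 1)) ℂ) (MvPolynomial (Fin (n + 1)) ℂ) :=
  mkDerivation ℂ fun i => C ((n : ℂ) - 2 * i.1) * X i

/-- The `H`-weight `n - 2i` of the variable `x_i`. -/
def wt (n : ℕ) (i : Fin (n + 1)) : ℤ := n - 2 * i.1

/-- The bound on `k` is needed: at `k = n + 1` the left side is `0`, the right side a multiple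
of `x_n`. -/
lemma opD_xvar (n k : ℕ) (hk : k ≤ n) : opD n (xvar n k) = C (k : ℂ) * xvar n (k - 1) := by
  have h : k < n + 1 := by omega
  conv_lhs => rw [xvar, dif_pos h]
  rw [opD, mkDerivation_X]

lemma opΔ_xvar (n k : ℕ) : opΔ n (xvar n k) = C ((n : ℂ) - k) * xvar n (k + 1) := by
  by_cases h : k < n + 1
  · conv_lhs => rw [xvar, dif_pos h]
    rw [opΔ, mkDerivation_X]
  · have h' : ¬ k + 1 < n + 1 := by omega
    simp [xvar, h, h']

lemma opH_xvar (n k : ℕ) : opH n (xvar n k) = C ((n : ℂ) - 2 * k) * xvar n k := by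
  by_cases h : k < n + 1
  · rw [xvar, dif_pos h, opH, mkDerivation_X]
  · simp [xvar, h]

lemma opD_X (n : ℕ) (i : Fin (n + 1)) : opD n (X i) = C (i.1 : ℂ) * xvar n (i.1 - 1) := by
  rw [opD, mkDerivation_X]

lemma opΔ_X (n : ℕ) (i : Fin (n + 1)) :
    opΔ n (X i) = C ((n : ℂ) - i.1) * xvar n (i.1 + 1) := by
  rw [opΔ, mkDerivation_X]

lemma opH_X (n : ℕ) (i : Fin (n + 1)) : opH n (X i) = C ((n : ℂ) - 2 * i.1) * X i := by
  rw [opH, mkDerivation_X]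

lemma derivation_C_mul {n : ℕ}
    (E : Derivation ℂ (MvPolynomial (Fin (n + 1)) ℂ) (MvPolynomial (Fin (n + 1)) ℂ))
    (c : ℂ) (p : MvPolynomial (Fin (n + 1)) ℂ) : E (C c * p) = C c * E p := by
  rw [← smul_eq_C_mul, ← smul_eq_C_mul, E.map_smul]

lemma comm_D_Δ (n : ℕ) : ⁅opD n, opΔ n⁆ = opH n := by
  refine derivation_ext fun i => ?_
  have hi : i.1 ≤ n := by omega
  rw [Derivation.commutator_apply, opD_X, opΔ_X, opH_X, derivation_C_mul, derivation_C_mul,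
    opΔ_xvar]
  have e1 : C ((n : ℂ) - i.1) * opD n (xvar n (i.1 + 1))
      = C ((n : ℂ) - i.1) * (C ((i.1 + 1 : ℕ) : ℂ) * X i) := by
    rcases hi.eq_or_lt with h | h
    · simp [h]
    · rw [opD_xvar n (i.1 + 1) h, Nat.add_sub_cancel, xvar_val]
  have e2 : C (i.1 : ℂ) * (C ((n : ℂ) - ((i.1 - 1 : ℕ) : ℂ)) * xvar n (i.1 - 1 + 1))
      = C (i.1 : ℂ) * (C ((n : ℂ) - i.1 + 1) * X i) := by
    rcases Nat.eq_zero_or_pos i.1 with h | h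
    · simp [h]
    · rw [Nat.sub_add_cancel h, xvar_val, Nat.cast_sub h]
      congr 3
      push_cast
      ring
  rw [e1, e2]
  simp only [← mul_assoc, ← C_mul, ← sub_mul, ← C_sub]
  congr 2
  push_cast
  ring

lemma comm_H_D (n : ℕ) : ⁅opH n, opD n⁆ = (2 : ℂ) • opD n := by
  refine derivation_ext fun i => ?_
  rw [Derivation.commutator_apply, Derivation.smul_apply, opD_X, opH_X, derivation_C_mul,
    derivation_C_mul, opH_xvar, opD_X, smul_eq_C_mul]
  simp only [← mul_assoc, ← C_mul, ← sub_mul, ← C_sub]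
  rcases Nat.eq_zero_or_pos i.1 with h | h
  · simp [h]
  · congr 2
    rw [Nat.cast_sub h]
    push_cast
    ring

lemma comm_H_Δ (n : ℕ) : ⁅opH n, opΔ n⁆ = (-2 : ℂ) • opΔ n := by
  refine derivation_ext fun i => ?_
  rw [Derivation.commutator_apply, Derivation.smul_apply, opΔ_X, opH_X, derivation_C_mul,
    derivation_C_mul, opH_xvar, opΔ_X, smul_eq_C_mul]
  simp only [← mul_assoc, ← C_mul, ← sub_mul, ← C_sub]
  congr 2
  push_cast
  ring

lemma opH_monomial (n : ℕ) (s : Fin (n + 1) →₀ ℕ) (r : ℂ) :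
    opH n (monomial s r) = (Finsupp.weight (wt n) s : ℂ) • monomial s r := by
  rw [opH, mkDerivation_monomial, Finsupp.weight_apply, Finsupp.sum, Finsupp.sum, Int.cast_sum,
    Finset.sum_smul, Finset.smul_sum]
  refine Finset.sum_congr rfl fun i hi => ?_
  have hs : s - Finsupp.single i 1 + Finsupp.single i 1 = s :=
    tsub_add_cancel_of_le
      (Finsupp.single_le_iff.2 (Nat.one_le_iff_ne_zero.2 (Finsupp.mem_support_iff.1 hi)))
  rw [smul_eq_mul, X, C_mul_monomial, monomial_mul, hs, smul_monomial, smul_monomial]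
  congr 1
  simp [wt]
  ring

lemma coeff_opH (n : ℕ) (e : Fin (n + 1) →₀ ℕ) (q : MvPolynomial (Fin (n + 1)) ℂ) :
    coeff e (opH n q) = (Finsupp.weight (wt n) e : ℂ) * coeff e q := by
  classical
  induction q using MvPolynomial.induction_on' with
  | monomial s r =>
    rw [opH_monomial, coeff_smul, coeff_monomial, smul_eq_mul]
    split_ifs with h
    · rw [h]
    · simp
  | add p q hp hq => rw [map_add, coeff_add, coeff_add, hp, hq, mul_add]

lemma component_eq_of_opH {n : ℕ} {q : MvPolynomial (Fin (n + 1)) ℂ} {μ : ℤ}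
    (hq : opH n q = (μ : ℂ) • q) (ν : ℤ) :
    weightedHomogeneousComponent (wt n) ν q = if μ = ν then q else 0 := by
  ext e
  rw [coeff_weightedHomogeneousComponent]
  have h := coeff_opH n e q
  rw [hq, coeff_smul, smul_eq_mul] at h
  by_cases hc : coeff e q = 0
  · split_ifs <;> simp [hc]
  · have hw : Finsupp.weight (wt n) e = μ := by
      have := mul_right_cancel₀ hc h
      exact_mod_cast this.symm
    rw [hw]
    split_ifs <;> simp

lemma opH_component (n : ℕ) (μ : ℤ) (q : MvPolynomial (Fin (n + 1)) ℂ) :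
    opH n (weightedHomogeneousComponent (wt n) μ q)
      = (μ : ℂ) • weightedHomogeneousComponent (wt n) μ q := by
  ext e
  rw [coeff_opH, coeff_smul, coeff_weightedHomogeneousComponent, smul_eq_mul]
  split_ifs with h
  · rw [h]
  · simp

/-- `D` raises the `H`-weight by `2`, hence carries the component of weight `μ` to the component
of weight `μ + 2`. -/
lemma opD_component (n : ℕ) (μ : ℤ) (q : MvPolynomial (Fin (n + 1)) ℂ) :
    opD n (weightedHomogeneousComponent (wt n) μ q)
      = weightedHomogeneousComponent (wt n) (μ + 2) (opD n q) := by
  induction q using MvPolynomial.induction_on' with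
  | monomial s r =>
    have h1 := opH_monomial n s r
    have h2 : opH n (opD n (monomial s r))
        = ((Finsupp.weight (wt n) s + 2 : ℤ) : ℂ) • opD n (monomial s r) := by
      have := congrArg (fun E => E (monomial s r)) (comm_H_D n)
      simp only [Derivation.commutator_apply, Derivation.smul_apply] at this
      rw [h1, (opD n).map_smul, sub_eq_iff_eq_add] at this
      rw [this]
      push_cast
      module
    rw [component_eq_of_opH h1, component_eq_of_opH h2]
    by_cases h : Finsupp.weight (wt n) s = μ <;> simp [h]
  | add p q hp hq => simp only [map_add, hp, hq]

/-! ### Local nilpotency of `Δ` and nonnegativity of the weights -/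

/-- By the Leibniz rule, a product of elements killed by powers of `Δ` is killed by a power
of `Δ`. -/
lemma iterate_mul_eq_zero (n : ℕ) : ∀ (s a b : ℕ) (p q : MvPolynomial (Fin (n + 1)) ℂ),
    a + b ≤ s → (opΔ n)^[a] p = 0 → (opΔ n)^[b] q = 0 → (opΔ n)^[s] (p * q) = 0 := by
  intro s
  induction s with
  | zero =>
    intro a b p q h ha hb
    obtain rfl : a = 0 := by omega
    simp only [Function.iterate_zero, id] at ha ⊢
    rw [ha, zero_mul]
  | succ s ih =>
    intro a b p q h ha hb
    rcases a with _ | a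
    · simp only [Function.iterate_zero, id] at ha
      rw [ha, zero_mul, iterate_map_zero]
    rcases b with _ | b
    · simp only [Function.iterate_zero, id] at hb
      rw [hb, mul_zero, iterate_map_zero]
    rw [Function.iterate_succ_apply, Derivation.leibniz, smul_eq_mul, smul_eq_mul,
      iterate_map_add, ih (a + 1) b p _ (by omega) ha (by rwa [← Function.iterate_succ_apply]),
      ih (b + 1) a q _ (by omega) hb (by rwa [← Function.iterate_succ_apply]), add_zero]

lemma iterate_eq_zero_of_le {n a b : ℕ} (h : a ≤ b) {p : MvPolynomial (Fin (n + 1)) ℂ}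
    (hp : (opΔ n)^[a] p = 0) : (opΔ n)^[b] p = 0 := by
  obtain ⟨c, rfl⟩ := Nat.exists_eq_add_of_le' h
  rw [Function.iterate_add_apply, hp, iterate_map_zero]

lemma iterate_xvar_eq_zero (n : ℕ) : ∀ m k, n + 1 ≤ k + m → (opΔ n)^[m] (xvar n k) = 0 := by
  intro m
  induction m with
  | zero =>
    intro k h
    have : ¬ k < n + 1 := by omega
    simp [xvar, this]
  | succ m ih =>
    intro k h
    rw [Function.iterate_succ_apply, opΔ_xvar, ← smul_eq_C_mul]
    have : ∀ (c : ℂ) (p : MvPolynomial (Fin (n + 1)) ℂ),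
        (opΔ n)^[m] (c • p) = c • (opΔ n)^[m] p := by
      intro c p
      exact ((Function.Semiconj.iterate_right
        (f := fun p : MvPolynomial (Fin (n + 1)) ℂ => c • p)
        (fun q => ((opΔ n).map_smul c q).symm) m) p).symm
    rw [this, ih (k + 1) (by omega), smul_zero]

lemma exists_iterate_eq_zero (n : ℕ) (p : MvPolynomial (Fin (n + 1)) ℂ) :
    ∃ k, (opΔ n)^[k] p = 0 := by
  induction p using MvPolynomial.induction_on with
  | C a => exact ⟨1, by simp⟩
  | add p q hp hq =>
    obtain ⟨a, ha⟩ := hp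
    obtain ⟨b, hb⟩ := hq
    exact ⟨max a b, by rw [iterate_map_add, iterate_eq_zero_of_le (le_max_left a b) ha,
      iterate_eq_zero_of_le (le_max_right a b) hb, add_zero]⟩
  | mul_X p i hp =>
    obtain ⟨a, ha⟩ := hp
    exact ⟨a + (n + 1), iterate_mul_eq_zero n _ a (n + 1) p _ le_rfl ha
      (by rw [← xvar_val]; exact iterate_xvar_eq_zero n _ _ (by omega))⟩

/-- A highest weight vector for a locally nilpotent lowering operator has nonnegative weight:
otherwise `D Δᵏ⁺¹ q = (k + 1)(μ - k) Δᵏ q` makes every `Δᵏ q` nonzero. -/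
lemma eq_zero_of_neg {n : ℕ} {q : MvPolynomial (Fin (n + 1)) ℂ} {μ : ℤ} (hμ : μ < 0)
    (hH : opH n q = (μ : ℂ) • q) (hD : opD n q = 0) : q = 0 := by
  have hHk : ∀ k : ℕ, opH n ((opΔ n)^[k] q) = ((μ : ℂ) - 2 * k) • (opΔ n)^[k] q := by
    intro k
    induction k with
    | zero => simpa using hH
    | succ k ih =>
      rw [Function.iterate_succ_apply']
      have := congrArg (fun E => E ((opΔ n)^[k] q)) (comm_H_Δ n)
      simp only [Derivation.commutator_apply, Derivation.smul_apply] at this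
      rw [ih, (opΔ n).map_smul, sub_eq_iff_eq_add] at this
      rw [this]
      push_cast
      module
  have hDk : ∀ k : ℕ, opD n ((opΔ n)^[k + 1] q)
      = (((k : ℂ) + 1) * (μ - k)) • (opΔ n)^[k] q := by
    intro k
    have key : ∀ k, opD n ((opΔ n)^[k + 1] q)
        = opΔ n (opD n ((opΔ n)^[k] q)) + opH n ((opΔ n)^[k] q) := by
      intro k
      rw [Function.iterate_succ_apply', ← comm_D_Δ, Derivation.commutator_apply]
      abel
    induction k with
    | zero =>
      rw [key, hHk]
      simp [hD]
    | succ k ih =>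
      rw [key, hHk, ih, (opΔ n).map_smul, ← Function.iterate_succ_apply' (opΔ n)]
      push_cast
      module
  by_contra hq
  have hne : ∀ k : ℕ, (opΔ n)^[k] q ≠ 0 := by
    intro k
    induction k with
    | zero => simpa using hq
    | succ k ih =>
      intro h0
      have h := hDk k
      rw [h0, map_zero] at h
      rcases smul_eq_zero.1 h.symm with h | h
      · rcases mul_eq_zero.1 h with h | h
        · exact Nat.cast_add_one_ne_zero k h
        · have : μ - (k : ℤ) = 0 := by exact_mod_cast h
          omega
      · exact ih h
  obtain ⟨k, hk⟩ := exists_iterate_eq_zero n q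
  exact hne k hk

/-- Every monomial of a polynomial killed by `D` has nonnegative weight. -/
lemma weight_nonneg {n : ℕ} {p : MvPolynomial (Fin (n + 1)) ℂ} (hp : opD n p = 0)
    {e : Fin (n + 1) →₀ ℕ} (he : coeff e p ≠ 0) : 0 ≤ Finsupp.weight (wt n) e := by
  by_contra! hneg
  have h0 := eq_zero_of_neg hneg (opH_component n _ p) (by rw [opD_component, hp, map_zero])
  have := congrArg (coeff e) h0
  rw [coeff_weightedHomogeneousComponent, if_pos rfl, coeff_zero] at this
  exact he this

/-! ### Invariants are killed by the infinitesimal generator -/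

/-- The action `σ_t` with `t` replaced by an indeterminate. -/
noncomputable def sigmaPoly (n : ℕ) :
    MvPolynomial (Fin (n + 1)) ℂ →ₐ[ℂ] Polynomial (MvPolynomial (Fin (n + 1)) ℂ) :=
  aeval fun i : Fin (n + 1) =>
    ∑ j ∈ Finset.univ.filter (fun j : Fin (n + 1) => j ≤ i),
      Polynomial.monomial (i.1 - j.1) (C (i.1.choose j.1 : ℂ) * X j)

lemma eval_sigmaPoly (n : ℕ) (t : ℂ) (p : MvPolynomial (Fin (n + 1)) ℂ) :
    (sigmaPoly n p).eval (C t) = sigma n t p := by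
  induction p using MvPolynomial.induction_on with
  | C a =>
    rw [← algebraMap_eq, AlgHom.commutes, AlgHom.commutes]
    exact Polynomial.eval_C
  | add p q hp hq => rw [map_add, map_add, Polynomial.eval_add, hp, hq]
  | mul_X p i hp =>
    rw [map_mul, map_mul, Polynomial.eval_mul, hp, sigmaPoly, sigma, aeval_X, aeval_X,
      Polynomial.eval_finsetSum]
    congr 1
    refine Finset.sum_congr rfl fun j _ => ?_
    rw [Polynomial.eval_monomial, C_mul, C_pow]
    ring

/-- To first order in `t`, `σ_t = 1 + t D`. -/
lemma coeff_sigmaPoly (n : ℕ) (p : MvPolynomial (Fin (n + 1)) ℂ) :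
    (sigmaPoly n p).coeff 0 = p ∧ (sigmaPoly n p).coeff 1 = opD n p := by
  induction p using MvPolynomial.induction_on with
  | C a =>
    have : sigmaPoly n (C a) = Polynomial.C (C a) := by
      rw [← algebraMap_eq, AlgHom.commutes]
      rfl
    rw [this]
    simp [Polynomial.coeff_C]
  | add p q hp hq => simp [hp.1, hp.2, hq.1, hq.2]
  | mul_X p i hp =>
    have h0 : (sigmaPoly n (X i)).coeff 0 = X i := by
      rw [sigmaPoly, aeval_X, Polynomial.finsetSum_coeff,
        Finset.sum_eq_single_of_mem i (by simp)]
      · simp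
      · intro j hj hji
        have hlt : j.1 < i.1 := lt_of_le_of_ne (by simpa using hj) (by simpa [Fin.ext_iff] using hji)
        rw [Polynomial.coeff_monomial, if_neg (by omega)]
    have h1 : (sigmaPoly n (X i)).coeff 1 = opD n (X i) := by
      rw [sigmaPoly, aeval_X, Polynomial.finsetSum_coeff, opD_X]
      rcases Nat.eq_zero_or_pos i.1 with h | h
      · rw [h]
        simp only [Nat.cast_zero, C_0, zero_mul]
        refine Finset.sum_eq_zero fun j _ => ?_
        rw [Polynomial.coeff_monomial, if_neg (by omega)]
      · have hlt : i.1 - 1 < n + 1 := by omega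
        rw [Finset.sum_eq_single_of_mem (⟨i.1 - 1, hlt⟩ : Fin (n + 1))
          (Finset.mem_filter.2 ⟨Finset.mem_univ _, Nat.sub_le _ _⟩)]
        · rw [Polynomial.coeff_monomial, if_pos (by simp; omega), xvar, dif_pos hlt]
          have hch : i.1.choose (i.1 - 1) = i.1 := by
            rw [Nat.choose_symm h, Nat.choose_one_right]
          rw [hch]
        · intro j hj hji
          rw [Polynomial.coeff_monomial, if_neg]
          intro h'
          exact hji (Fin.ext (by simp; omega))
    rw [map_mul, Polynomial.mul_coeff_zero, Polynomial.mul_coeff_one, h0, h1, hp.1, hp.2,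
      Derivation.leibniz]
    refine ⟨rfl, ?_⟩
    simp only [smul_eq_mul]
    ring

/-- Invariance under all `t ∈ ℂ` is an identity of polynomials in `t`, whose linear coefficient
is `D p = 0`. -/
lemma opD_eq_zero {n : ℕ} {p : MvPolynomial (Fin (n + 1)) ℂ} (hp : ∀ t, sigma n t p = p) :
    opD n p = 0 := by
  have h : sigmaPoly n p = Polynomial.C p := by
    refine Polynomial.eq_of_infinite_eval_eq _ _ ?_
    refine (Set.infinite_range_of_injective (C_injective (Fin (n + 1)) ℂ)).mono ?_
    rintro _ ⟨t, rfl⟩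
    rw [Set.mem_ofPred_eq, eval_sigmaPoly, hp, Polynomial.eval_C]
  rw [← (coeff_sigmaPoly n p).2, h, Polynomial.coeff_C, if_neg one_ne_zero]

/-! ### Quadratic invariants -/

/-- The linear map `ℂ[T] → ℂ[x₀,…,xₙ]` with `T^k ↦ x_k` (umbral calculus). -/
noncomputable def umbral (n : ℕ) : Polynomial ℂ →ₗ[ℂ] MvPolynomial (Fin (n + 1)) ℂ :=
  Polynomial.lsum fun k => LinearMap.toSpanSingleton ℂ _ (xvar n k)

lemma umbral_X_pow (n k : ℕ) : umbral n (Polynomial.X ^ k) = xvar n k := by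
  rw [← Polynomial.monomial_one_right_eq_X_pow, umbral, Polynomial.lsum_apply,
    Polynomial.sum_monomial_index _ _ (by simp)]
  simp

lemma sigma_xvar (n : ℕ) (t : ℂ) (k : ℕ) (hk : k ≤ n) :
    sigma n t (xvar n k) = umbral n ((Polynomial.X + Polynomial.C t) ^ k) := by
  have h : k < n + 1 := by omega
  rw [xvar, dif_pos h, sigma, aeval_X, add_pow, map_sum]
  have e1 : ∀ m ∈ Finset.range (k + 1),
      umbral n (Polynomial.X ^ m * Polynomial.C t ^ (k - m) * (k.choose m : Polynomial ℂ))
        = C ((k.choose m : ℂ) * t ^ (k - m)) * xvar n m := by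
    intro m _
    rw [← umbral_X_pow, ← smul_eq_C_mul, ← map_smul, Polynomial.smul_eq_C_mul]
    congr 1
    simp only [map_mul, map_pow, map_natCast]
    ring
  rw [Finset.sum_congr rfl e1]
  refine Finset.sum_bij (fun j _ => j.1) ?_ ?_ ?_ ?_
  · intro j hj
    have : j.1 ≤ k := by simpa [Fin.le_def] using hj
    simp; omega
  · intro j _ j' _ hjj
    exact Fin.ext hjj
  · intro m hm
    have hm' : m ≤ k := by simpa [Nat.lt_succ_iff] using hm
    exact ⟨⟨m, by omega⟩, by simpa [Fin.le_def] using hm', rfl⟩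
  · intro j _
    rw [xvar_val]

open scoped TensorProduct in
/-- The linear map `ℂ[T] ⊗ ℂ[T] → ℂ[x₀,…,xₙ]` with `Tⁱ ⊗ Tʲ ↦ x_i x_j`. -/
noncomputable def umbral₂ (n : ℕ) :
    Polynomial ℂ ⊗[ℂ] Polynomial ℂ →ₗ[ℂ] MvPolynomial (Fin (n + 1)) ℂ :=
  LinearMap.mul' ℂ _ ∘ₗ TensorProduct.map (umbral n) (umbral n)

/-- The quadratic invariant `∑ᵢ (-1)^(2k-i) (2k choose i) x_i x_{2k-i}`. -/
noncomputable def quad (n k : ℕ) : MvPolynomial (Fin (n + 1)) ℂ :=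
  ∑ i ∈ Finset.range (2 * k + 1),
    C ((-1 : ℂ) ^ (2 * k - i) * ((2 * k).choose i : ℂ)) * (xvar n i * xvar n (2 * k - i))

open scoped TensorProduct in
lemma umbral₂_sub_pow (n m : ℕ) (f : Polynomial ℂ) :
    umbral₂ n ((f ⊗ₜ[ℂ] 1 - 1 ⊗ₜ[ℂ] f) ^ m) = ∑ i ∈ Finset.range (m + 1),
      C ((-1 : ℂ) ^ (m - i) * (m.choose i : ℂ)) *
        (umbral n (f ^ i) * umbral n (f ^ (m - i))) := by
  rw [sub_eq_add_neg, add_pow, map_sum]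
  refine Finset.sum_congr rfl fun i _ => ?_
  have : (f ⊗ₜ[ℂ] (1 : Polynomial ℂ)) ^ i * (-((1 : Polynomial ℂ) ⊗ₜ[ℂ] f)) ^ (m - i)
      * (m.choose i : Polynomial ℂ ⊗[ℂ] Polynomial ℂ)
      = ((-1 : ℂ) ^ (m - i) * (m.choose i : ℂ)) • ((f ^ i) ⊗ₜ[ℂ] (f ^ (m - i))) := by
    have hc : Polynomial.C ((-1 : ℂ) ^ (m - i) * (m.choose i : ℂ)) ⊗ₜ[ℂ] (1 : Polynomial ℂ)
        = (-1) ^ (m - i) * (m.choose i : Polynomial ℂ ⊗[ℂ] Polynomial ℂ) := by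
      have := map_mul ((Algebra.TensorProduct.includeLeftRingHom :
        Polynomial ℂ →+* Polynomial ℂ ⊗[ℂ] Polynomial ℂ).comp Polynomial.C)
          ((-1 : ℂ) ^ (m - i)) (m.choose i : ℂ)
      rw [map_pow, map_neg, map_one, map_natCast] at this
      exact this
    have e : (Polynomial.C ((-1 : ℂ) ^ (m - i) * (m.choose i : ℂ)) * f ^ i) ⊗ₜ[ℂ] (f ^ (m - i))
        = Polynomial.C ((-1 : ℂ) ^ (m - i) * (m.choose i : ℂ)) ⊗ₜ[ℂ] (1 : Polynomial ℂ)
          * ((f ^ i) ⊗ₜ[ℂ] (1 : Polynomial ℂ) * ((1 : Polynomial ℂ) ⊗ₜ[ℂ] (f ^ (m - i)))) := by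
      rw [Algebra.TensorProduct.tmul_mul_tmul, Algebra.TensorProduct.tmul_mul_tmul, mul_one,
        one_mul, one_mul]
    rw [neg_pow ((1 : Polynomial ℂ) ⊗ₜ[ℂ] f), Algebra.TensorProduct.tmul_pow,
      Algebra.TensorProduct.tmul_pow, one_pow, one_pow, TensorProduct.smul_tmul',
      Polynomial.smul_eq_C_mul, e, hc]
    ring
  rw [this, map_smul, smul_eq_C_mul]
  simp [umbral₂]

open scoped TensorProduct in
/-- In umbral notation `quad n k` is `(α - β)^(2k)`, and `σ_t` translates both `α` and `β`
by `t`. -/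
lemma sigma_quad (n k : ℕ) (hk : 2 * k ≤ n) (t : ℂ) : sigma n t (quad n k) = quad n k := by
  have h1 : quad n k = umbral₂ n
      (((Polynomial.X : Polynomial ℂ) ⊗ₜ[ℂ] 1 - 1 ⊗ₜ[ℂ] Polynomial.X) ^ (2 * k)) := by
    simp only [umbral₂_sub_pow, umbral_X_pow, quad]
  have h2 : sigma n t (quad n k) = umbral₂ n
      (((Polynomial.X + Polynomial.C t : Polynomial ℂ) ⊗ₜ[ℂ] 1
        - 1 ⊗ₜ[ℂ] (Polynomial.X + Polynomial.C t)) ^ (2 * k)) := by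
    rw [umbral₂_sub_pow, quad, map_sum]
    refine Finset.sum_congr rfl fun i hi => ?_
    have hi' : i ≤ 2 * k := by simpa [Nat.lt_succ_iff] using hi
    have hC : ∀ c : ℂ, sigma n t (C c) = C c := (sigma n t).commutes
    rw [map_mul (sigma n t), hC, map_mul (sigma n t), sigma_xvar n t i (by omega),
      sigma_xvar n t (2 * k - i) (by omega)]
  have h3 : (Polynomial.C t : Polynomial ℂ) ⊗ₜ[ℂ] (1 : Polynomial ℂ)
      = (1 : Polynomial ℂ) ⊗ₜ[ℂ] (Polynomial.C t) := by
    rw [← mul_one (Polynomial.C t), ← Polynomial.smul_eq_C_mul, TensorProduct.smul_tmul]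
  rw [h2, h1, TensorProduct.add_tmul, TensorProduct.tmul_add, h3, add_sub_add_right_eq_sub]

lemma constantCoeff_quad (n k : ℕ) : constantCoeff (quad n k) = 0 := by
  have hx : ∀ i, constantCoeff (xvar n i) = 0 := by
    intro i
    rw [xvar]
    split_ifs <;> simp
  simp [quad, hx]

/-- If `a_j = 0` for `j < k`, only the middle term of `quad n k` survives at `a`. -/
lemma eval_quad (n k : ℕ) (hk : k < n + 1) (a : Fin (n + 1) → ℂ)
    (ha : ∀ j : Fin (n + 1), j.1 < k → a j = 0) :
    eval a (quad n k) = (-1) ^ k * ((2 * k).choose k : ℂ) * (a ⟨k, hk⟩ * a ⟨k, hk⟩) := by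
  have hx : ∀ i, i < k → eval a (xvar n i) = 0 := by
    intro i hi
    rw [xvar, dif_pos (by omega), eval_X, ha _ hi]
  rw [quad, map_sum, Finset.sum_eq_single_of_mem k (by simp; omega)]
  · have : 2 * k - k = k := by omega
    rw [this, xvar, dif_pos hk]
    simp
  · intro i hi hik
    have hi' : i ≤ 2 * k := by simpa [Nat.lt_succ_iff] using hi
    rcases lt_or_gt_of_ne hik with h | h
    · simp [hx i h]
    · simp [hx (2 * k - i) (by omega)]

/-- For `n ≥ 1` and a point `a = (a₀,…,aₙ) ∈ ℂ^{n+1}`, every `σ`-invariant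
polynomial with zero constant term vanishes at `a` if and only if `a_j = 0` for all
`j ≤ ⌊n/2⌋`: all positive-degree invariants vanish at a configuration of `n` points
on `ℙ¹` exactly when strictly more than `n/2` of the points coincide at `[1:0]`. -/
theorem all_invariants_vanish_iff (n : ℕ) (hn : 1 ≤ n) (a : Fin (n + 1) → ℂ) :
    (∀ p : MvPolynomial (Fin (n + 1)) ℂ,
        (∀ t : ℂ, sigma n t p = p) → constantCoeff p = 0 → eval a p = 0) ↔
      (∀ j : Fin (n + 1), (j : ℕ) ≤ n / 2 → a j = 0) := by
  constructor
  · rintro h ⟨k, hk⟩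
    induction k using Nat.strong_induction_on with
    | _ k ih =>
      intro hkn
      have hkn' : k ≤ n / 2 := hkn
      have h0 := h (quad n k) (sigma_quad n k (by omega)) (constantCoeff_quad n k)
      rw [eval_quad n k hk a fun j hj => ih j.1 hj j.2 (by simp; omega)] at h0
      have hc : ((2 * k).choose k : ℂ) ≠ 0 :=
        Nat.cast_ne_zero.2 (Nat.choose_pos (by omega)).ne'
      simpa [hc] using h0
  · intro ha p hp hp0
    rw [eval_eq]
    refine Finset.sum_eq_zero fun e he => ?_
    have hc : coeff e p ≠ 0 := mem_support_iff.1 he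
    have hw := weight_nonneg (opD_eq_zero hp) hc
    -- A nontrivial monomial of nonnegative weight involves some `x_i` with `i ≤ n / 2`.
    obtain ⟨i, hi, hin⟩ : ∃ i ∈ e.support, i.1 ≤ n / 2 := by
      by_contra! hall
      have hne : e.support.Nonempty := by
        rw [Finsupp.support_nonempty_iff]
        rintro rfl
        exact hc hp0
      rw [Finsupp.weight_apply, Finsupp.sum] at hw
      refine absurd hw (not_le.2 (Finset.sum_neg (fun i hi => ?_) hne))
      have h1 := hall i hi
      have h2 : 0 < e i := Nat.pos_of_ne_zero (Finsupp.mem_support_iff.1 hi)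
      have h3 : wt n i < 0 := by
        unfold wt
        omega
      rw [nsmul_eq_mul]
      exact mul_neg_of_pos_of_neg (by exact_mod_cast h2) h3
    rw [Finset.prod_eq_zero hi, mul_zero]
    rw [ha i hin, zero_pow (Finsupp.mem_support_iff.1 hi)]
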